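/- Let X be a pospace and let f, u, u', v, v' be dipaths in X with u(1) = u'(1) = f(0), v(0) = v'(0) = f(1), u(0) = u'(0) and v(1) = v'(1). If ⟨u⟩ ⋆ ⟨f⟩ ⋆ ⟨v⟩ = ⟨u'⟩ ⋆ ⟨f⟩ ⋆ ⟨v'⟩ as traces, then ⟨u⟩ = ⟨u'⟩ and ⟨v⟩ = ⟨v'⟩. In other words, between any two traces of a pospace there is at most one extension, so the factorization category of the trace category of X is a poset, isomorphic to the trace poset tpos(X). -/

import Mathlib

open unitInterval

noncomputable section

/-- A reparametrization of the unit interval: continuous, monotone, fixing the endpoints. -/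
def IsReparam (φ : unitInterval → unitInterval) : Prop :=
  Continuous φ ∧ Monotone φ ∧ φ 0 = 0 ∧ φ 1 = 1

/-- Reparametrization equivalence of paths. -/
def ReparamEquiv {X : Type*} (f g : unitInterval → X) : Prop :=
  ∃ φ ψ : unitInterval → unitInterval, IsReparam φ ∧ IsReparam ψ ∧ f ∘ φ = g ∘ ψ

/-- A dipath in a pospace: a continuous monotone map `[0,1] → X`. -/
def IsDipath {X : Type*} [TopologicalSpace X] [Preorder X] (p : unitInterval → X) : Prop :=
  Continuous p ∧ Monotone p

/-- Concatenation of paths: `f` (rescaled) on `[0,1/2]`, `g` (rescaled) on `[1/2,1]`. -/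
def concatFun {X : Type*} (f g : unitInterval → X) : unitInterval → X :=
  fun t => if (t : ℝ) ≤ 1 / 2 then f (Set.projIcc 0 1 zero_le_one (2 * (t : ℝ)))
    else g (Set.projIcc 0 1 zero_le_one (2 * (t : ℝ) - 1))

/-- Traces: paths up to reparametrization equivalence. -/
def Trace (X : Type*) : Type _ := Quot (ReparamEquiv (X := X))

/-- The trace of a path. -/
def trc {X : Type*} (f : unitInterval → X) : Trace X := Quot.mk _ f

theorem aux_reparam_surj {φ : unitInterval → unitInterval} (h : IsReparam φ) :
    Function.Surjective φ := by
  obtain ⟨hc, -, h0, h1⟩ := h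
  intro y
  have := intermediate_value_univ (0 : unitInterval) 1 hc
  rw [h0, h1] at this
  exact this ⟨y.2.1, y.2.2⟩

theorem aux_range_of_trc {X : Type*} {f g : unitInterval → X} (h : trc f = trc g) :
    Set.range f = Set.range g := by
  have key : ∀ a b : unitInterval → X, ReparamEquiv a b → Set.range a = Set.range b := by
    rintro a b ⟨φ, ψ, hφ, hψ, e⟩
    rw [← (aux_reparam_surj hφ).range_comp a, e, (aux_reparam_surj hψ).range_comp b]
  exact congrArg (Quot.lift (fun a : unitInterval → X => Set.range a) key) h

theorem aux_range_concat {X : Type*} (f g : unitInterval → X) (hfg : f 1 = g 0) :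
    Set.range (concatFun f g) = Set.range f ∪ Set.range g := by
  ext x
  constructor
  · rintro ⟨t, rfl⟩
    unfold concatFun
    split_ifs
    · exact Or.inl ⟨_, rfl⟩
    · exact Or.inr ⟨_, rfl⟩
  · rintro (⟨t, rfl⟩ | ⟨t, rfl⟩)
    · have h0 := t.2.1
      have h1 := t.2.2
      refine ⟨⟨(t : ℝ) / 2, by constructor <;> linarith⟩, ?_⟩
      unfold concatFun
      rw [if_pos (by simp only; linarith)]
      have : 2 * ((t : ℝ) / 2) = t := by ring
      simp only [this, Set.projIcc_val]
    · have h0 := t.2.1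
      have h1 := t.2.2
      by_cases ht : (t : ℝ) = 0
      · have ht' : t = 0 := Subtype.ext ht
        refine ⟨⟨1 / 2, by constructor <;> norm_num⟩, ?_⟩
        unfold concatFun
        rw [if_pos (by simp only; exact le_rfl)]
        have : (2 : ℝ) * (1 / 2) = 1 := by ring
        simp only [this, Set.projIcc_right, ht']
        exact hfg
      · have hpos : 0 < (t : ℝ) := lt_of_le_of_ne h0 (Ne.symm ht)
        refine ⟨⟨((t : ℝ) + 1) / 2, by constructor <;> linarith⟩, ?_⟩
        unfold concatFun
        rw [if_neg (by simp only; linarith)]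
        have : 2 * (((t : ℝ) + 1) / 2) - 1 = t := by ring
        simp only [this, Set.projIcc_val]

theorem aux_trc_of_range {X : Type*} [TopologicalSpace X] [PartialOrder X]
    [OrderClosedTopology X] {f g : unitInterval → X} (hf : IsDipath f) (hg : IsDipath g)
    (h : Set.range f = Set.range g) : trc f = trc g := by
  obtain ⟨hfc, hfm⟩ := hf
  obtain ⟨hgc, hgm⟩ := hg
  let F : ℝ → X := fun s => f (Set.projIcc 0 1 zero_le_one s)
  let G : ℝ → X := fun s => g (Set.projIcc 0 1 zero_le_one s)
  have hFc : Continuous F := hfc.comp continuous_projIcc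
  have hGc : Continuous G := hgc.comp continuous_projIcc
  have hFm : Monotone F := fun a b hab => hfm (Set.monotone_projIcc _ hab)
  have hGm : Monotone G := fun a b hab => hgm (Set.monotone_projIcc _ hab)
  have hF0 : F 0 = f 0 := congrArg f (Set.projIcc_left _)
  have hG0 : G 0 = g 0 := congrArg g (Set.projIcc_left _)
  have hF1 : F 1 = f 1 := congrArg f (Set.projIcc_right _)
  have hG1 : G 1 = g 1 := congrArg g (Set.projIcc_right _)
  have hFl : ∀ y, G 0 ≤ F y := by
    intro y
    obtain ⟨x, hx⟩ : F y ∈ Set.range g := h ▸ ⟨_, rfl⟩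
    rw [hG0, ← hx]
    exact hgm x.2.1
  have hFu : ∀ y, F y ≤ G 1 := by
    intro y
    obtain ⟨x, hx⟩ : F y ∈ Set.range g := h ▸ ⟨_, rfl⟩
    rw [hG1, ← hx]
    exact hgm x.2.2
  have hGl : ∀ y, F 0 ≤ G y := by
    intro y
    obtain ⟨x, hx⟩ : G y ∈ Set.range f := h ▸ ⟨_, rfl⟩
    rw [hF0, ← hx]
    exact hfm x.2.1
  have hGu : ∀ y, G y ≤ F 1 := by
    intro y
    obtain ⟨x, hx⟩ : G y ∈ Set.range f := h ▸ ⟨_, rfl⟩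
    rw [hF1, ← hx]
    exact hfm x.2.2
  have htot : ∀ x y, F x ≤ G y ∨ G y ≤ F x := by
    intro x y
    obtain ⟨z, hz⟩ : G y ∈ Set.range f := h ▸ ⟨_, rfl⟩
    rw [← hz]
    rcases le_total (Set.projIcc 0 1 zero_le_one x) z with h1 | h1
    · exact Or.inl (hfm h1)
    · exact Or.inr (hfm h1)
  let A : ℝ → Set ℝ := fun r => {s | 0 ≤ s ∧ s ≤ 1 ∧ s ≤ r ∧ F s ≤ G (r - s)}
  have hAc : ∀ r, IsClosed (A r) := by
    intro r
    refine (isClosed_le continuous_const continuous_id).inter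
      ((isClosed_le continuous_id continuous_const).inter
      ((isClosed_le continuous_id continuous_const).inter
      (isClosed_le hFc (hGc.comp (continuous_const.sub continuous_id)))))
  have hAb : ∀ r, BddAbove (A r) := fun r => ⟨1, fun s hs => hs.2.1⟩
  have hA0 : ∀ r, 0 ≤ r → (0 : ℝ) ∈ A r := fun r hr => ⟨le_rfl, zero_le_one, hr, hGl _⟩
  let S : ℝ → ℝ := fun r => sSup (A r)
  have hSm : ∀ r, 0 ≤ r → S r ∈ A r := fun r hr => (hAc r).csSup_mem ⟨0, hA0 r hr⟩ (hAb r)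
  have hSle : ∀ r s, s ∈ A r → s ≤ S r := fun r s hs => le_csSup (hAb r) hs
  have hmono : ∀ r r', 0 ≤ r → r ≤ r' → S r ≤ S r' := by
    intro r r' hr hrr
    obtain ⟨a, b, c, d⟩ := hSm r hr
    exact hSle _ _ ⟨a, b, c.trans hrr, d.trans (hGm (by linarith))⟩
  have hlip : ∀ r r', 0 ≤ r → r ≤ r' → S r' - S r ≤ r' - r := by
    intro r r' hr hrr
    obtain ⟨a, b, c, d⟩ := hSm r' (hr.trans hrr)
    rcases le_total (S r') (r' - r) with h1 | h1
    · have := (hSm r hr).1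
      linarith
    · have : S r' - (r' - r) ∈ A r := by
        refine ⟨by linarith, by linarith, by linarith, ?_⟩
        refine (hFm (by linarith)).trans (d.trans (hGm (by linarith)))
      have := hSle _ _ this
      linarith
  have ht1 : ∀ r, 0 ≤ r → r ≤ 2 → r - S r ≤ 1 := by
    intro r hr hr2
    rcases le_total r 1 with h1 | h1
    · have := (hSm r hr).1
      linarith
    · have : r - 1 ∈ A r := by
        refine ⟨by linarith, by linarith, by linarith, ?_⟩
        have e : r - (r - 1) = 1 := by ring
        rw [e]
        exact hFu _
      have := hSle _ _ this
      linarith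
  have heq : ∀ r, 0 ≤ r → F (S r) = G (r - S r) := by
    intro r hr
    obtain ⟨a, b, c, d⟩ := hSm r hr
    refine le_antisymm d ?_
    rcases eq_or_lt_of_le b with h1 | h1
    · rw [h1]
      exact hGu _
    rcases eq_or_lt_of_le c with h2 | h2
    · have e : r - S r = 0 := by linarith
      rw [e]
      exact hFl _
    have hB : IsClosed {s | G (r - s) ≤ F s} :=
      isClosed_le (hGc.comp (continuous_const.sub continuous_id)) hFc
    have hlt : S r < min 1 r := lt_min h1 h2
    have hsub : Set.Ioo (S r) (min 1 r) ⊆ {s | G (r - s) ≤ F s} := by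
      intro s hs
      rcases htot s (r - s) with h3 | h3
      · exfalso
        have := hSle r s ⟨a.trans hs.1.le, hs.2.le.trans (min_le_left _ _),
          hs.2.le.trans (min_le_right _ _), h3⟩
        exact absurd hs.1 (not_lt.mpr this)
      · exact h3
    have hcl := closure_minimal hsub hB
    rw [closure_Ioo hlt.ne] at hcl
    exact hcl ⟨le_rfl, hlt.le⟩
  have hS0 : S 0 = 0 := le_antisymm (hSm 0 le_rfl).2.2.1 (hSm 0 le_rfl).1
  have hS2 : S 2 = 1 := by
    have h1 := (hSm 2 zero_le_two).2.1
    have h2 := ht1 2 zero_le_two le_rfl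
    linarith
  have hSc : Continuous (fun x : unitInterval => S (2 * (x : ℝ))) := by
    have hl : LipschitzWith 2 (fun x : unitInterval => S (2 * (x : ℝ))) := by
      apply LipschitzWith.of_le_add_mul
      intro x y
      have hx := x.2.1
      have hy := y.2.1
      have hd : dist x y = |(x : ℝ) - y| := rfl
      rw [hd]
      push_cast
      rcases le_total (x : ℝ) y with h1 | h1
      · have := hmono (2 * x) (2 * y) (by linarith) (by linarith)
        have := abs_nonneg ((x : ℝ) - y)
        linarith
      · have := hlip (2 * y) (2 * x) (by linarith) (by linarith)
        have := le_abs_self ((x : ℝ) - y)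
        linarith
    exact hl.continuous
  have hr0 : ∀ x : unitInterval, 0 ≤ 2 * (x : ℝ) := fun x => by
    have := x.2.1
    linarith
  have hr2 : ∀ x : unitInterval, 2 * (x : ℝ) ≤ 2 := fun x => by
    have := x.2.2
    linarith
  let φ : unitInterval → unitInterval := fun x =>
    ⟨S (2 * (x : ℝ)), (hSm _ (hr0 x)).1, (hSm _ (hr0 x)).2.1⟩
  let ψ : unitInterval → unitInterval := fun x =>
    ⟨2 * (x : ℝ) - S (2 * (x : ℝ)), sub_nonneg.mpr (hSm _ (hr0 x)).2.2.1,
      ht1 _ (hr0 x) (hr2 x)⟩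
  apply Quot.sound
  refine ⟨φ, ψ, ⟨hSc.subtype_mk _, ?_, ?_, ?_⟩,
    ⟨((continuous_const.mul continuous_subtype_val).sub hSc).subtype_mk _, ?_, ?_, ?_⟩, ?_⟩
  · intro x y hxy
    have hxy' : (x : ℝ) ≤ y := hxy
    exact hmono _ _ (hr0 x) (by linarith)
  · apply Subtype.ext
    simp [φ, hS0]
  · apply Subtype.ext
    simp [φ, hS2]
  · intro x y hxy
    have hxy' : (x : ℝ) ≤ y := hxy
    have := hlip _ _ (hr0 x) (by linarith : 2 * (x : ℝ) ≤ 2 * y)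
    change 2 * (x : ℝ) - S (2 * (x : ℝ)) ≤ 2 * (y : ℝ) - S (2 * (y : ℝ))
    linarith
  · apply Subtype.ext
    simp [ψ, hS0]
  · apply Subtype.ext
    simp [ψ, hS2]
    norm_num
  · funext x
    have e := heq _ (hr0 x)
    have e1 : F (S (2 * (x : ℝ))) = f (φ x) := congrArg f (Set.projIcc_val _ (φ x))
    have e2 : G (2 * (x : ℝ) - S (2 * (x : ℝ))) = g (ψ x) :=
      congrArg g (Set.projIcc_val _ (ψ x))
    exact e1.symm.trans (e.trans e2)

theorem aux_concat_one {X : Type*} (f g : unitInterval → X) : concatFun f g 1 = g 1 := by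
  unfold concatFun
  rw [if_neg (by norm_num)]
  have : (2 : ℝ) * ((1 : unitInterval) : ℝ) - 1 = 1 := by norm_num
  rw [this, Set.projIcc_right]
  rfl

theorem aux_left {X : Type*} [PartialOrder X] {f u v : unitInterval → X}
    (hf : Monotone f) (hu : Monotone u) (hv : Monotone v)
    (hu1 : u 1 = f 0) (hv0 : v 0 = f 1) :
    Set.range u = (Set.range (concatFun (concatFun u f) v)) ∩ Set.Iic (f 0) := by
  rw [aux_range_concat _ _ ((aux_concat_one u f).trans hv0.symm), aux_range_concat _ _ hu1]
  have h01 : f 0 ≤ f 1 := hf zero_le_one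
  ext x
  constructor
  · rintro ⟨t, rfl⟩
    exact ⟨Or.inl (Or.inl ⟨t, rfl⟩), hu1 ▸ hu t.2.2⟩
  · rintro ⟨(h | ⟨t, rfl⟩) | ⟨t, rfl⟩, hx⟩
    · exact h
    · exact ⟨1, hu1.trans (le_antisymm (hf t.2.1) hx)⟩
    · have : v 0 ≤ v t := hv t.2.1
      exact ⟨1, hu1.trans (le_antisymm (h01.trans (hv0 ▸ this)) hx)⟩

theorem aux_right {X : Type*} [PartialOrder X] {f u v : unitInterval → X}
    (hf : Monotone f) (hu : Monotone u) (hv : Monotone v)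
    (hu1 : u 1 = f 0) (hv0 : v 0 = f 1) :
    Set.range v = (Set.range (concatFun (concatFun u f) v)) ∩ Set.Ici (f 1) := by
  rw [aux_range_concat _ _ ((aux_concat_one u f).trans hv0.symm), aux_range_concat _ _ hu1]
  have h01 : f 0 ≤ f 1 := hf zero_le_one
  ext x
  constructor
  · rintro ⟨t, rfl⟩
    exact ⟨Or.inr ⟨t, rfl⟩, hv0 ▸ hv t.2.1⟩
  · rintro ⟨(⟨t, rfl⟩ | ⟨t, rfl⟩) | h, hx⟩
    · have : u t ≤ u 1 := hu t.2.2
      exact ⟨0, hv0.trans (le_antisymm hx ((hu1 ▸ this).trans h01))⟩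
    · exact ⟨0, hv0.trans (le_antisymm hx (hf t.2.2))⟩
    · exact h

/-- In a pospace `X`, extensions between traces are unique: if `f, u, u', v, v'`
are dipaths with `u(1) = u'(1) = f(0)`, `v(0) = v'(0) = f(1)`, `u(0) = u'(0)`, `v(1) = v'(1)`,
and `⟨u⟩ ⋆ ⟨f⟩ ⋆ ⟨v⟩ = ⟨u'⟩ ⋆ ⟨f⟩ ⋆ ⟨v'⟩` as traces, then `⟨u⟩ = ⟨u'⟩` and `⟨v⟩ = ⟨v'⟩`.
(Hence the factorization category of the trace category of `X` is a poset, the trace poset.) -/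
theorem extension_unique
    {X : Type*} [TopologicalSpace X] [PartialOrder X] [T2Space X] [OrderClosedTopology X]
    (f u u' v v' : unitInterval → X)
    (hf : IsDipath f) (hu : IsDipath u) (hu' : IsDipath u')
    (hv : IsDipath v) (hv' : IsDipath v')
    (hu1 : u 1 = f 0) (hu'1 : u' 1 = f 0)
    (hv0 : v 0 = f 1) (hv'0 : v' 0 = f 1)
    (hu0 : u 0 = u' 0) (hv1 : v 1 = v' 1)
    (h : trc (concatFun (concatFun u f) v) = trc (concatFun (concatFun u' f) v')) :
    trc u = trc u' ∧ trc v = trc v' := by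
  have hr := aux_range_of_trc h
  constructor
  · apply aux_trc_of_range hu hu'
    rw [aux_left hf.2 hu.2 hv.2 hu1 hv0, aux_left hf.2 hu'.2 hv'.2 hu'1 hv'0, hr]
  · apply aux_trc_of_range hv hv'
    rw [aux_right hf.2 hu.2 hv.2 hu1 hv0, aux_right hf.2 hu'.2 hv'.2 hu'1 hv'0, hr]

end
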